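/- arXiv:2003.07648 — 2 statements merged into one kernel-verified Lean document; each statement's English description precedes it below -/
import Mathlib

section
/- Average Value-at-Risk bound: let α ∈ (0,1) satisfy φ(0)·α + φ(1/(1−α))·(1−α) ≤ β. Then AVaR_α(X) := (1/(1−α))·∫_α^1 F_X^{-1}(u) du ≤ ρ_{φ,β}(X) for every X ∈ L^ψ. -/
open MeasureTheory
open scoped ENNReal

noncomputable section

/-- A divergence function: convex, lower semicontinuous `φ : ℝ → ℝ ∪ {∞}` with `φ 1 = 0`,
effective domain `[0, ∞)` and superlinear growth `φ x / x → ∞` as `x → ∞`. -/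
structure IsDivergenceFunction (φ : ℝ → EReal) : Prop where
  convex : ∀ x y a b : ℝ, 0 < a → 0 < b → a + b = 1 →
    φ (a * x + b * y) ≤ (a : EReal) * φ x + (b : EReal) * φ y
  lsc : LowerSemicontinuous φ
  ne_bot : ∀ x : ℝ, φ x ≠ ⊥
  one : φ 1 = 0
  domain : ∀ x : ℝ, φ x ≠ ⊤ ↔ 0 ≤ x
  superlinear : ∀ M : ℝ, ∃ N : ℝ, ∀ x : ℝ, N ≤ x → ((M * x : ℝ) : EReal) ≤ φ x

/-- The convex conjugate `ψ(y) = sup_z (y·z − φ(z))`, as an extended real number. -/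
def psiE (φ : ℝ → EReal) (y : ℝ) : EReal := ⨆ z : ℝ, (((y * z : ℝ) : EReal) - φ z)

/-- The convex conjugate, as a real number (it is finite for divergence functions). -/
def psiR (φ : ℝ → EReal) (y : ℝ) : ℝ := (psiE φ y).toReal

open Classical in
/-- The objective `t (β + μ + E ψ(X/t − μ))` of the φ-divergence risk measure;
the value is `⊤` when `ψ(X/t − μ)` fails to be integrable. -/
def rhoObj {Ω : Type*} [MeasurableSpace Ω] (φ : ℝ → EReal) (β : ℝ) (P : Measure Ω)
    (X : Ω → ℝ) (μ t : ℝ) : EReal :=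
  if Integrable (fun ω => psiR φ (X ω / t - μ)) P then
    (((t * (β + μ + ∫ ω, psiR φ (X ω / t - μ) ∂P)) : ℝ) : EReal)
  else ⊤

/-- The φ-divergence risk measure `ρ_{φ,β}(X) = inf_{μ ∈ ℝ, t > 0} t (β + μ + E ψ(X/t − μ))`. -/
def rhoDiv {Ω : Type*} [MeasurableSpace Ω] (φ : ℝ → EReal) (β : ℝ) (P : Measure Ω)
    (X : Ω → ℝ) : EReal :=
  ⨅ (μ : ℝ) (t : ℝ) (_ : 0 < t), rhoObj φ β P X μ t

/-- The (generalized inverse) quantile function `F_X⁻¹(u) = inf { x : P(X ≤ x) ≥ u }`. -/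
def quantile {Ω : Type*} [MeasurableSpace Ω] (P : Measure Ω) (X : Ω → ℝ) (u : ℝ) : ℝ :=
  sInf {x : ℝ | u ≤ (P {ω | X ω ≤ x}).toReal}
variable {Ω : Type*} [MeasurableSpace Ω]

/-!
Sampling the quantile function at a uniform point of `(0, 1)` reproduces the law of `X`, so
`ρ_{φ,β}(X)` may be computed on `(0, 1)` with `F_X⁻¹` in place of `X`. There weak duality applies:
for a density `Z` with `E Z = 1` and `E φ(Z) ≤ β`, integrating the Fenchel–Young inequality
`(X/t - μ) Z - φ(Z) ≤ ψ(X/t - μ)` gives `E[Z X] ≤ t (β + μ + E ψ(X/t - μ))` for all `μ` and `t > 0`.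
The density `Z = 1_{(α,1)} / (1 - α)` turns `E[Z F_X⁻¹]` into `AVaR_α(X)` and the constraint
`E φ(Z) ≤ β` into `φ(0) α + φ(1/(1-α)) (1-α) ≤ β`.
-/

section Conjugate

variable {φ : ℝ → EReal}

theorem IsDivergenceFunction.eq_top_of_neg (hφ : IsDivergenceFunction φ) {z : ℝ} (hz : z < 0) :
    φ z = ⊤ :=
  of_not_not fun h => hz.not_ge ((hφ.domain z).1 h)

theorem IsDivergenceFunction.exists_forall_coe_le (hφ : IsDivergenceFunction φ) :
    ∃ m : ℝ, ∀ z, (m : EReal) ≤ φ z := by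
  obtain ⟨N, hN⟩ := hφ.superlinear 0
  obtain ⟨z₀, -, hz₀⟩ := (hφ.lsc.lowerSemicontinuousOn _).exists_isMinOn
    (Set.nonempty_Icc.2 (le_max_right N 0)) isCompact_Icc
  obtain ⟨m, -, hm⟩ := EReal.lt_iff_exists_real_btwn.1 (bot_lt_iff_ne_bot.2 (hφ.ne_bot z₀))
  refine ⟨min m 0, fun z => ?_⟩
  rcases lt_or_ge z 0 with hz | hz
  · simp [hφ.eq_top_of_neg hz]
  rcases le_total N z with hNz | hzN
  · exact (EReal.coe_le_coe (by simp)).trans (hN z hNz)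
  · calc ((min m 0 : ℝ) : EReal) ≤ m := EReal.coe_le_coe (min_le_left m 0)
      _ ≤ φ z₀ := hm.le
      _ ≤ φ z := hz₀ ⟨hz, hzN.trans (le_max_left N 0)⟩

theorem IsDivergenceFunction.psiE_ne_top (hφ : IsDivergenceFunction φ) (y : ℝ) :
    psiE φ y ≠ ⊤ := by
  obtain ⟨m, hm⟩ := hφ.exists_forall_coe_le
  obtain ⟨N, hN⟩ := hφ.superlinear y
  suffices h : psiE φ y ≤ ((max 0 (|y| * N - m) : ℝ) : EReal) from
    ne_top_of_le_ne_top (EReal.coe_ne_top _) h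
  refine iSup_le fun z => ?_
  rcases lt_or_ge z 0 with hz | hz
  · simp [hφ.eq_top_of_neg hz]
  rcases le_total N z with hNz | hzN
  · calc ((y * z : ℝ) : EReal) - φ z ≤ ((0 : ℝ) : EReal) :=
          EReal.sub_le_of_le_add (by simpa using hN z hNz)
      _ ≤ _ := EReal.coe_le_coe (le_max_left _ _)
  · have hyz : y * z ≤ |y| * N := mul_le_mul (le_abs_self y) hzN hz (abs_nonneg y)
    calc ((y * z : ℝ) : EReal) - φ z ≤ ((y * z : ℝ) : EReal) - m := EReal.sub_le_sub le_rfl (hm z)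
      _ = ((y * z - m : ℝ) : EReal) := (EReal.coe_sub _ _).symm
      _ ≤ _ := EReal.coe_le_coe (le_max_of_le_right (by linarith))

theorem ne_bot_of_psiE_ne_top {y : ℝ} (hy : psiE φ y ≠ ⊤) (z : ℝ) : φ z ≠ ⊥ := by
  intro hz
  have hle : ((y * z : ℝ) : EReal) - φ z ≤ psiE φ y :=
    le_iSup (fun z : ℝ => ((y * z : ℝ) : EReal) - φ z) z
  rw [hz, EReal.coe_sub_bot] at hle
  exact hy (top_le_iff.1 hle)

theorem mul_sub_toReal_le_psiR {y z : ℝ} (hy : psiE φ y ≠ ⊤) (hz : φ z ≠ ⊤) :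
    y * z - (φ z).toReal ≤ psiR φ y := by
  have hle : ((y * z - (φ z).toReal : ℝ) : EReal) ≤ psiE φ y := by
    rw [EReal.coe_sub, EReal.coe_toReal hz (ne_bot_of_psiE_ne_top hy z)]
    exact le_iSup (fun z : ℝ => ((y * z : ℝ) : EReal) - φ z) z
  exact EReal.toReal_le_toReal hle (EReal.coe_ne_bot _) hy

theorem lowerSemicontinuous_psiE (φ : ℝ → EReal) : LowerSemicontinuous (psiE φ) := by
  refine lowerSemicontinuous_iSup fun z => Continuous.lowerSemicontinuous ?_
  induction φ z with
  | bot => simpa only [EReal.coe_sub_bot] using continuous_const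
  | top => simpa only [EReal.sub_top] using continuous_const
  | coe r =>
    simp only [← EReal.coe_sub]
    exact continuous_coe_real_ereal.comp (by fun_prop)

theorem measurable_psiR (φ : ℝ → EReal) : Measurable (psiR φ) :=
  (lowerSemicontinuous_psiE φ).measurable.ereal_toReal

end Conjugate

section RiskMeasure

variable {Ω' : Type*} [MeasurableSpace Ω'] {P : Measure Ω} {Q : Measure Ω'}
  {X : Ω → ℝ}

theorem rhoDiv_eq_of_identDistrib {Y : Ω' → ℝ} (h : ProbabilityTheory.IdentDistrib X Y P Q)
    (φ : ℝ → EReal) (β : ℝ) : rhoDiv φ β P X = rhoDiv φ β Q Y := by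
  refine iInf_congr fun μ => iInf_congr fun t => iInf_congr fun _ => ?_
  have hψ := h.comp (u := fun x => psiR φ (x / t - μ)) ((measurable_psiR φ).comp (by fun_prop))
  have hint : Integrable (fun ω => psiR φ (X ω / t - μ)) P ↔
      Integrable (fun ω => psiR φ (Y ω / t - μ)) Q := hψ.integrable_iff
  have heq : ∫ ω, psiR φ (X ω / t - μ) ∂P = ∫ ω, psiR φ (Y ω / t - μ) ∂Q := hψ.integral_eq
  rw [rhoObj, rhoObj, heq]
  congr 1
  exact propext hint

variable {φ : ℝ → EReal} {β : ℝ} {Z : Ω → ℝ}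

theorem integral_mul_le_of_integrable_psiR (hψ : ∀ y, psiE φ y ≠ ⊤) (hφZ : ∀ᵐ ω ∂P, φ (Z ω) ≠ ⊤)
    (hφZint : Integrable (fun ω => (φ (Z ω)).toReal) P)
    (hZX : Integrable (fun ω => Z ω * X ω) P) (hZ1 : ∫ ω, Z ω ∂P = 1)
    (hcost : ∫ ω, (φ (Z ω)).toReal ∂P ≤ β) {μ t : ℝ} (ht : 0 < t)
    (hint : Integrable (fun ω => psiR φ (X ω / t - μ)) P) :
    ∫ ω, Z ω * X ω ∂P ≤ t * (β + μ + ∫ ω, psiR φ (X ω / t - μ) ∂P) := by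
  have hZ : Integrable Z P := integrable_of_integral_eq_one hZ1
  have hlin : Integrable (fun ω => t⁻¹ * (Z ω * X ω) - μ * Z ω) P :=
    (hZX.const_mul _).sub (hZ.const_mul _)
  have fenchel_young : ∀ᵐ ω ∂P,
      t⁻¹ * (Z ω * X ω) - μ * Z ω - (φ (Z ω)).toReal ≤ psiR φ (X ω / t - μ) := by
    filter_upwards [hφZ] with ω hω
    convert mul_sub_toReal_le_psiR (hψ (X ω / t - μ)) hω using 2
    ring
  have hmono := integral_mono_ae (hlin.sub hφZint) hint fenchel_young
  have hleft : ∫ ω, (t⁻¹ * (Z ω * X ω) - μ * Z ω - (φ (Z ω)).toReal) ∂P =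
      t⁻¹ * ∫ ω, Z ω * X ω ∂P - μ - ∫ ω, (φ (Z ω)).toReal ∂P := by
    rw [integral_sub hlin hφZint, integral_sub (hZX.const_mul _) (hZ.const_mul _),
      integral_const_mul, integral_const_mul, hZ1, mul_one]
  rw [← inv_mul_le_iff₀ ht]
  linarith [hleft.ge.trans hmono]

theorem integral_mul_le_rhoDiv (hψ : ∀ y, psiE φ y ≠ ⊤) (hφZ : ∀ᵐ ω ∂P, φ (Z ω) ≠ ⊤)
    (hφZint : Integrable (fun ω => (φ (Z ω)).toReal) P)
    (hZX : Integrable (fun ω => Z ω * X ω) P) (hZ1 : ∫ ω, Z ω ∂P = 1)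
    (hcost : ∫ ω, (φ (Z ω)).toReal ∂P ≤ β) :
    ((∫ ω, Z ω * X ω ∂P : ℝ) : EReal) ≤ rhoDiv φ β P X := by
  refine le_iInf fun μ => le_iInf fun t => le_iInf fun ht => ?_
  unfold rhoObj
  split_ifs with hint
  · exact EReal.coe_le_coe
      (integral_mul_le_of_integrable_psiR hψ hφZ hφZint hZX hZ1 hcost ht hint)
  · exact le_top

end RiskMeasure

section Quantile

theorem sInf_setOf_le_stieltjesFunction_le_iff (F : StieltjesFunction ℝ) {u x : ℝ}
    (hne : {y | u ≤ F y}.Nonempty) (hbdd : BddBelow {y | u ≤ F y}) :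
    sInf {y | u ≤ F y} ≤ x ↔ u ≤ F x := by
  refine ⟨fun h => ?_, fun h => csInf_le hbdd h⟩
  have hright : Filter.Tendsto F (nhdsWithin x (Set.Ioi x)) (nhds (F x)) :=
    (F.right_continuous x).mono Set.Ioi_subset_Ici_self
  refine ge_of_tendsto hright ?_
  filter_upwards [self_mem_nhdsWithin] with y hxy
  obtain ⟨z, hz, hzy⟩ := exists_lt_of_csInf_lt hne (h.trans_lt hxy)
  exact hz.trans (F.mono hzy.le)

variable {P : Measure Ω} [IsProbabilityMeasure P] {X : Ω → ℝ}

theorem cdf_map_eq_toReal (hX : AEMeasurable X P) (x : ℝ) :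
    ProbabilityTheory.cdf (P.map X) x = (P {ω | X ω ≤ x}).toReal := by
  have := Measure.isProbabilityMeasure_map hX
  rw [ProbabilityTheory.cdf_eq_real, map_measureReal_apply_of_aemeasurable hX measurableSet_Iic]
  rfl

theorem quantile_le_iff (hX : AEMeasurable X P) {u x : ℝ} (hu : u ∈ Set.Ioo (0 : ℝ) 1) :
    quantile P X u ≤ x ↔ u ≤ (P {ω | X ω ≤ x}).toReal := by
  simp only [quantile, ← cdf_map_eq_toReal hX]
  set F := ProbabilityTheory.cdf (P.map X)
  apply sInf_setOf_le_stieltjesFunction_le_iff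
  · obtain ⟨b, hb⟩ := ((ProbabilityTheory.tendsto_cdf_atTop (P.map X)).eventually
      (lt_mem_nhds hu.2)).exists
    exact ⟨b, hb.le⟩
  · obtain ⟨b, hb⟩ := ((ProbabilityTheory.tendsto_cdf_atBot (P.map X)).eventually
      (gt_mem_nhds hu.1)).exists
    exact ⟨b, fun x hx => (F.mono.reflect_lt (hb.trans_le hx)).le⟩

theorem monotoneOn_quantile (hX : AEMeasurable X P) :
    MonotoneOn (quantile P X) (Set.Ioo (0 : ℝ) 1) := fun _ hu _ hv huv =>
  (quantile_le_iff hX hu).2 (huv.trans ((quantile_le_iff hX hv).1 le_rfl))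

theorem volume_Iic_inter_Ioo_zero_one {c : ℝ} (hc : c ≤ 1) :
    volume (Set.Iic c ∩ Set.Ioo (0 : ℝ) 1) = ENNReal.ofReal c := by
  rw [measure_congr (Filter.EventuallyEq.rfl.inter Ioo_ae_eq_Ioc), Set.inter_comm,
    Set.Ioc_inter_Iic, min_eq_right hc, Real.volume_Ioc, sub_zero]

theorem identDistrib_quantile (hX : AEMeasurable X P) :
    ProbabilityTheory.IdentDistrib X (quantile P X) P (volume.restrict (Set.Ioo (0 : ℝ) 1)) := by
  have hq : AEMeasurable (quantile P X) (volume.restrict (Set.Ioo (0 : ℝ) 1)) :=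
    aemeasurable_restrict_of_monotoneOn measurableSet_Ioo (monotoneOn_quantile hX)
  refine ⟨hX, hq, Measure.ext_of_Iic _ _ fun x => ?_⟩
  have hpre : quantile P X ⁻¹' Set.Iic x ∩ Set.Ioo 0 1 =
      Set.Iic (P {ω | X ω ≤ x}).toReal ∩ Set.Ioo 0 1 := by
    ext u
    exact and_congr_left fun hu => quantile_le_iff hX hu
  calc P.map X (Set.Iic x) = P {ω | X ω ≤ x} :=
        Measure.map_apply_of_aemeasurable hX measurableSet_Iic
    _ = ENNReal.ofReal (P {ω | X ω ≤ x}).toReal :=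
        (ENNReal.ofReal_toReal (measure_ne_top P _)).symm
    _ = volume (Set.Iic (P {ω | X ω ≤ x}).toReal ∩ Set.Ioo 0 1) :=
        (volume_Iic_inter_Ioo_zero_one measureReal_le_one).symm
    _ = (volume.restrict (Set.Ioo 0 1)).map (quantile P X) (Set.Iic x) := by
        rw [Measure.map_apply_of_aemeasurable hq measurableSet_Iic,
          Measure.restrict_apply' measurableSet_Ioo, hpre]

end Quantile

section AVaRDensity

/-- The density `1_{(α,1)} / (1 - α)` on the unit interval, against which the quantile function
of `X` integrates to `AVaR_α(X)`. -/
def avarDensity (α : ℝ) : ℝ → ℝ := (Set.Ioo α 1).indicator fun _ => 1 / (1 - α)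

variable {α : ℝ}

theorem comp_avarDensity (g : ℝ → ℝ) :
    (fun u => g (avarDensity α u)) =
      fun u => g 0 + (Set.Ioo α 1).indicator (fun _ => g (1 / (1 - α)) - g 0) u := by
  ext u
  by_cases hu : u ∈ Set.Ioo α 1 <;> simp [avarDensity, hu]

theorem integrableOn_comp_avarDensity (g : ℝ → ℝ) :
    IntegrableOn (fun u => g (avarDensity α u)) (Set.Ioo 0 1) := by
  rw [comp_avarDensity]
  exact (integrable_const _).add ((integrable_const _).indicator measurableSet_Ioo)

theorem Ioo_zero_one_inter_Ioo (hα : 0 ≤ α) : Set.Ioo 0 1 ∩ Set.Ioo α 1 = Set.Ioo α 1 :=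
  Set.inter_eq_right.2 (Set.Ioo_subset_Ioo_left hα)

theorem setIntegral_comp_avarDensity (hα0 : 0 ≤ α) (hα1 : α ≤ 1) (g : ℝ → ℝ) :
    ∫ u in Set.Ioo 0 1, g (avarDensity α u) = g 0 * α + g (1 / (1 - α)) * (1 - α) := by
  rw [comp_avarDensity, integral_add (integrable_const _)
    ((integrable_const _).indicator measurableSet_Ioo), setIntegral_const,
    setIntegral_indicator measurableSet_Ioo, Ioo_zero_one_inter_Ioo hα0, setIntegral_const,
    Real.volume_real_Ioo_of_le zero_le_one, Real.volume_real_Ioo_of_le hα1]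
  simp only [smul_eq_mul]
  ring

theorem avarDensity_mul (f : ℝ → ℝ) :
    (fun u => avarDensity α u * f u) = (Set.Ioo α 1).indicator fun u => 1 / (1 - α) * f u := by
  ext u
  exact (Set.indicator_mul_left (Set.Ioo α 1) (fun _ => 1 / (1 - α)) f).symm

theorem setIntegral_avarDensity_mul (hα : 0 ≤ α) (f : ℝ → ℝ) :
    ∫ u in Set.Ioo 0 1, avarDensity α u * f u = 1 / (1 - α) * ∫ u in Set.Ioo α 1, f u := by
  rw [avarDensity_mul, setIntegral_indicator measurableSet_Ioo, Ioo_zero_one_inter_Ioo hα,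
    integral_const_mul]

end AVaRDensity

theorem avar_le_rhoDiv_general (P : Measure Ω) [IsProbabilityMeasure P] {φ : ℝ → EReal}
    (hψ : ∀ y, psiE φ y ≠ ⊤) {α β : ℝ} (hα0 : 0 ≤ α) (hα1 : α < 1) (hφ0 : φ 0 ≠ ⊤)
    (hφα : φ (1 / (1 - α)) ≠ ⊤)
    (hcond : (φ 0).toReal * α + (φ (1 / (1 - α))).toReal * (1 - α) ≤ β)
    {X : Ω → ℝ} (hX : Integrable X P) :
    (((1 / (1 - α)) * ∫ u in Set.Ioo α 1, quantile P X u : ℝ) : EReal) ≤ rhoDiv φ β P X := by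
  have hlaw := identDistrib_quantile hX.aemeasurable
  have hq : IntegrableOn (quantile P X) (Set.Ioo 0 1) := hlaw.integrable_iff.1 hX
  rw [rhoDiv_eq_of_identDistrib hlaw, ← setIntegral_avarDensity_mul hα0]
  refine integral_mul_le_rhoDiv hψ (.of_forall fun u => ?_)
    (integrableOn_comp_avarDensity fun z => (φ z).toReal) ?_ ?_ ?_
  · obtain hu | hu := Set.indicator_eq_zero_or_self (Set.Ioo α 1) (fun _ => 1 / (1 - α)) u <;>
      rwa [avarDensity, hu]
  · rw [avarDensity_mul]
    exact (hq.const_mul _).indicator measurableSet_Ioo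
  · have hα : 1 - α ≠ 0 := (sub_pos.2 hα1).ne'
    simpa [hα] using setIntegral_comp_avarDensity hα0 hα1.le id
  · rwa [setIntegral_comp_avarDensity hα0 hα1.le fun z => (φ z).toReal]

/-- Average Value-at-Risk bound: if `α ∈ (0,1)` satisfies
`φ(0)·α + φ(1/(1−α))·(1−α) ≤ β`, then `AVaR_α(X) ≤ ρ_{φ,β}(X)` for every `X ∈ L^ψ`. -/
theorem avar_le_rhoDiv (P : Measure Ω) [IsProbabilityMeasure P]
    (φ : ℝ → EReal) (hφ : IsDivergenceFunction φ) (β : ℝ) (hβ : 0 < β)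
    (α : ℝ) (hα0 : 0 < α) (hα1 : α < 1)
    (hcond : (φ 0).toReal * α + (φ (1 / (1 - α))).toReal * (1 - α) ≤ β)
    (X : Ω → ℝ) (hX : Integrable X P)
    (hXpsi : ∃ t : ℝ, 0 < t ∧ Integrable (fun ω => psiR φ (t * |X ω|)) P) :
    (((1 / (1 - α)) * ∫ u in Set.Ioo α 1, quantile P X u : ℝ) : EReal) ≤
      rhoDiv φ β P X := by
  exact avar_le_rhoDiv_general P hφ.psiE_ne_top hα0.le hα1 ((hφ.domain 0).2 le_rfl)
    ((hφ.domain _).2 (one_div_nonneg.2 (sub_nonneg.2 hα1.le))) hcond hX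
end
end

section
/- Characterizing equations: let X ∈ L^ψ and let ψ′ : ℝ → ℝ be a subderivative of ψ, i.e., ψ′(x)·(z − x) ≤ ψ(z) − ψ(x) for all x, z ∈ ℝ. Suppose μ* ∈ ℝ and t* > 0 satisfy E[ψ′(X/t* − μ*)] = 1 and E[φ(ψ′(X/t* − μ*))] = β. Then Z* := ψ′(X/t* − μ*) satisfies Z* ≥ 0 a.s., E[Z*] = 1 and E[φ(Z*)] ≤ β, and E[X·Z*] = sup{E[X·Z] : Z ≥ 0, E[Z] = 1, E[φ(Z)] ≤ β} = t*·(β + μ* + E[ψ(X/t* − μ*)]) = ρ_{φ,β}(X); in particular, μ* and t* attain the infimum in the definition of ρ_{φ,β}(X). -/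
open MeasureTheory
open scoped ENNReal

noncomputable section

/-- The dual set of the φ-divergence risk measure: values `E[X·Z]` for densities
`Z ≥ 0` with `E Z = 1` and `E φ(Z) ≤ β`. -/
def dualSet {Ω : Type*} [MeasurableSpace Ω] (φ : ℝ → EReal) (β : ℝ) (P : Measure Ω)
    (X : Ω → ℝ) : Set EReal :=
  {v | ∃ Z : Ω → ℝ, Integrable Z P ∧ (∀ᵐ ω ∂P, 0 ≤ Z ω) ∧ (∫ ω, Z ω ∂P) = 1 ∧
    Integrable (fun ω => (φ (Z ω)).toReal) P ∧ (∫ ω, (φ (Z ω)).toReal ∂P) ≤ β ∧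
    Integrable (fun ω => X ω * Z ω) P ∧ v = ((∫ ω, X ω * Z ω ∂P : ℝ) : EReal)}
variable {Ω : Type*} [MeasurableSpace Ω]

/-!
The value of the risk measure is squeezed by duality. For feasible `Z`, the Fenchel–Young inequality
`Y Z ≤ ψ(Y) + φ(Z)` at `Y = X/s - m`, integrated, gives `E[X Z] ≤ s (β + m + E ψ(X/s - m))`, so the
dual supremum lies below `ρ`. When `Z` is a subgradient of `ψ` at `X/t - μ`, the Fenchel–Young
inequality is an equality, because the convex lower semicontinuous `φ` is the supremum of its affine
minorants and hence the conjugate of `ψ`. The characterizing equations make such a `Z` feasible with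
`E φ(Z) = β`, so that `E[X Z]` is itself one of the values over which `ρ` is the infimum.
-/

/-- `g` is a subgradient of `f : ℝ → ℝ` at `x`: the line of slope `g` through `(x, f x)` stays below
the graph of `f`. Convexity of `f` is not part of the notion. -/
def IsSubgradientAt (f : ℝ → ℝ) (x g : ℝ) : Prop :=
  ∀ z, g * (z - x) ≤ f z - f x

lemma IsSubgradientAt.nonneg_of_monotone {f : ℝ → ℝ} {x g : ℝ} (hg : IsSubgradientAt f x g)
    (hf : Monotone f) : 0 ≤ g := by
  have hle : f (x - 1) ≤ f x := hf (by linarith)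
  have hsub := hg (x - 1)
  linarith

namespace IsDivergenceFunction

variable {φ : ℝ → EReal} {x y z u : ℝ}

lemma coe_toReal (hφ : IsDivergenceFunction φ) (hz : 0 ≤ z) : ((φ z).toReal : EReal) = φ z :=
  EReal.coe_toReal ((hφ.domain z).2 hz) (hφ.ne_bot z)

lemma eq_top_of_neg_s16 (hφ : IsDivergenceFunction φ) (hz : z < 0) : φ z = ⊤ :=
  not_not.1 (mt (hφ.domain z).1 hz.not_ge)

lemma convexOn_toReal (hφ : IsDivergenceFunction φ) :
    ConvexOn ℝ (Set.Ici 0) fun z => (φ z).toReal := by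
  refine convexOn_iff_forall_pos.2 ⟨convex_Ici 0, fun x hx y hy a b ha hb hab => ?_⟩
  have hx : 0 ≤ x := hx
  have hy : 0 ≤ y := hy
  have h := hφ.convex x y a b ha hb hab
  rw [← hφ.coe_toReal hx, ← hφ.coe_toReal hy, ← hφ.coe_toReal (by positivity)] at h
  exact_mod_cast h

lemma lowerSemicontinuousOn_toReal (hφ : IsDivergenceFunction φ) :
    LowerSemicontinuousOn (fun z => (φ z).toReal) (Set.Ici 0) := by
  intro z hz a ha
  have hlt : (a : EReal) < φ z := by
    rw [← hφ.coe_toReal hz]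
    exact_mod_cast ha
  filter_upwards [(hφ.lsc z a hlt).filter_mono nhdsWithin_le_nhds,
    self_mem_nhdsWithin] with w hw hw0
  rw [← hφ.coe_toReal hw0] at hw
  exact_mod_cast hw

lemma psiE_le_coe_iff (hφ : IsDivergenceFunction φ) :
    psiE φ y ≤ u ↔ ∀ z, 0 ≤ z → y * z - (φ z).toReal ≤ u := by
  refine iSup_le_iff.trans (forall_congr' fun z => ?_)
  rcases lt_or_ge z 0 with hz | hz
  · simp [hφ.eq_top_of_neg_s16 hz, hz.not_ge]
  · rw [← hφ.coe_toReal hz, EReal.toReal_coe]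
    norm_cast
    simp [hz]

-- For large `z` superlinearity gives `y z ≤ φ z`; below that an affine minorant of `φ` suffices.
lemma exists_forall_mul_sub_toReal_le (hφ : IsDivergenceFunction φ) (y : ℝ) :
    ∃ u, ∀ z, 0 ≤ z → y * z - (φ z).toReal ≤ u := by
  obtain ⟨N, hN⟩ := hφ.superlinear y
  obtain ⟨c, d, hcd⟩ :=
    hφ.convexOn_toReal.exists_affine_le_real isClosed_Ici hφ.lowerSemicontinuousOn_toReal
  refine ⟨max 0 (|y - c| * N - d), fun z hz => ?_⟩
  rcases le_total N z with hNz | hzN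
  · have hlarge := hN z hNz
    rw [← hφ.coe_toReal hz, EReal.coe_le_coe_iff] at hlarge
    exact le_max_of_le_left (by linarith)
  · have hslope : (y - c) * z ≤ |y - c| * N :=
      mul_le_mul (le_abs_self _) hzN hz (abs_nonneg _)
    have hminorant := hcd z hz
    exact le_max_of_le_right (by linarith)

lemma coe_psiR (hφ : IsDivergenceFunction φ) (y : ℝ) : (psiR φ y : EReal) = psiE φ y := by
  obtain ⟨u, hu⟩ := hφ.exists_forall_mul_sub_toReal_le y
  refine EReal.coe_toReal (ne_top_of_le_ne_top (EReal.coe_ne_top u) (hφ.psiE_le_coe_iff.2 hu)) ?_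
  have hbot : (y * 0 : ℝ) - φ 0 ≠ ⊥ := by
    rw [← hφ.coe_toReal le_rfl, ← EReal.coe_sub]
    exact EReal.coe_ne_bot _
  exact ne_bot_of_le_ne_bot hbot (le_iSup (fun z : ℝ => ((y * z : ℝ) : EReal) - φ z) 0)

lemma psiR_le_iff (hφ : IsDivergenceFunction φ) :
    psiR φ y ≤ u ↔ ∀ z, 0 ≤ z → y * z - (φ z).toReal ≤ u := by
  rw [← hφ.psiE_le_coe_iff, ← hφ.coe_psiR, EReal.coe_le_coe_iff]

lemma mul_le_psiR_add_toReal (hφ : IsDivergenceFunction φ) (y : ℝ) (hz : 0 ≤ z) :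
    y * z ≤ psiR φ y + (φ z).toReal :=
  sub_le_iff_le_add.1 (hφ.psiR_le_iff.1 le_rfl z hz)

lemma monotone_psiR (hφ : IsDivergenceFunction φ) : Monotone (psiR φ) := by
  refine fun x y hxy => hφ.psiR_le_iff.2 fun z hz => ?_
  linarith [mul_le_mul_of_nonneg_right hxy hz, hφ.mul_le_psiR_add_toReal y hz]

-- Fenchel–Moreau: an affine minorant `y w + c` of `φ` amounts to the bound `psiR φ y ≤ -c`.
lemma exists_le_mul_sub_psiR_of_lt (hφ : IsDivergenceFunction φ) (hz : 0 ≤ z)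
    (hu : u < (φ z).toReal) : ∃ y, u ≤ y * z - psiR φ y := by
  obtain ⟨y, c, hle, rfl⟩ := hφ.convexOn_toReal.exists_affine_le_of_lt_real hz hu isClosed_Ici
    hφ.lowerSemicontinuousOn_toReal
  have hψ : psiR φ y ≤ -c := hφ.psiR_le_iff.2 fun w hw => by linarith [hle w hw]
  exact ⟨y, by linarith⟩

lemma nonneg_of_isSubgradientAt (hφ : IsDivergenceFunction φ)
    (hz : IsSubgradientAt (psiR φ) x z) : 0 ≤ z :=
  hz.nonneg_of_monotone hφ.monotone_psiR

lemma mul_eq_psiR_add_toReal (hφ : IsDivergenceFunction φ) (hz : IsSubgradientAt (psiR φ) x z) :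
    x * z = psiR φ x + (φ z).toReal := by
  have hz0 := hφ.nonneg_of_isSubgradientAt hz
  have hle : (φ z).toReal ≤ x * z - psiR φ x := by
    refine le_of_forall_lt_imp_le_of_dense fun u hu => ?_
    obtain ⟨y, hy⟩ := hφ.exists_le_mul_sub_psiR_of_lt hz0 hu
    linarith [hz y]
  linarith [hφ.mul_le_psiR_add_toReal x hz0]

end IsDivergenceFunction

section Expectation

variable {P : Measure Ω} {φ : ℝ → EReal} {X Y Z : Ω → ℝ} {β μ t : ℝ}

lemma integrable_div_sub_mul (hZ : Integrable Z P) (hXZ : Integrable (fun ω => X ω * Z ω) P)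
    (μ t : ℝ) : Integrable (fun ω => (X ω / t - μ) * Z ω) P := by
  simp only [sub_mul, div_mul_eq_mul_div]
  exact (hXZ.div_const t).sub (hZ.const_mul μ)

lemma integral_div_sub_mul (hZ : Integrable Z P) (hXZ : Integrable (fun ω => X ω * Z ω) P)
    (μ t : ℝ) :
    ∫ ω, (X ω / t - μ) * Z ω ∂P = (∫ ω, X ω * Z ω ∂P) / t - μ * ∫ ω, Z ω ∂P := by
  simp only [sub_mul, div_mul_eq_mul_div]
  rw [integral_sub (hXZ.div_const t) (hZ.const_mul μ), integral_div, integral_const_mul]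

namespace IsDivergenceFunction

lemma integrable_mul_of_integrable_psiR (hφ : IsDivergenceFunction φ)
    (hX : AEStronglyMeasurable X P)
    (hXψ : ∃ s : ℝ, 0 < s ∧ Integrable (fun ω => psiR φ (s * |X ω|)) P)
    (hZ : AEStronglyMeasurable Z P) (hZ0 : ∀ᵐ ω ∂P, 0 ≤ Z ω)
    (hφZ : Integrable (fun ω => (φ (Z ω)).toReal) P) : Integrable (fun ω => X ω * Z ω) P := by
  obtain ⟨s, hs, hψ⟩ := hXψ
  refine ((hψ.fun_add hφZ).div_const s).mono' (hX.mul hZ) ?_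
  filter_upwards [hZ0] with ω hω
  rw [Real.norm_eq_abs, abs_mul, abs_of_nonneg hω, le_div_iff₀' hs, ← mul_assoc]
  exact hφ.mul_le_psiR_add_toReal _ hω

lemma integral_mul_le_integral_psiR_add (hφ : IsDivergenceFunction φ) (hZ0 : ∀ᵐ ω ∂P, 0 ≤ Z ω)
    (hYZ : Integrable (fun ω => Y ω * Z ω) P) (hψY : Integrable (fun ω => psiR φ (Y ω)) P)
    (hφZ : Integrable (fun ω => (φ (Z ω)).toReal) P) :
    ∫ ω, Y ω * Z ω ∂P ≤ ∫ ω, psiR φ (Y ω) ∂P + ∫ ω, (φ (Z ω)).toReal ∂P := by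
  rw [← integral_add hψY hφZ]
  exact integral_mono_ae hYZ (hψY.add hφZ)
    (hZ0.mono fun ω hω => hφ.mul_le_psiR_add_toReal (Y ω) hω)

lemma integrable_psiR_of_isSubgradientAt (hφ : IsDivergenceFunction φ)
    (hZ : ∀ᵐ ω ∂P, IsSubgradientAt (psiR φ) (Y ω) (Z ω))
    (hYZ : Integrable (fun ω => Y ω * Z ω) P)
    (hφZ : Integrable (fun ω => (φ (Z ω)).toReal) P) : Integrable (fun ω => psiR φ (Y ω)) P :=
  (hYZ.sub hφZ).congr
    (hZ.mono fun _ hω => sub_eq_of_eq_add (hφ.mul_eq_psiR_add_toReal hω))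

lemma integral_mul_eq_integral_psiR_add (hφ : IsDivergenceFunction φ)
    (hZ : ∀ᵐ ω ∂P, IsSubgradientAt (psiR φ) (Y ω) (Z ω))
    (hYZ : Integrable (fun ω => Y ω * Z ω) P)
    (hφZ : Integrable (fun ω => (φ (Z ω)).toReal) P) :
    ∫ ω, Y ω * Z ω ∂P = ∫ ω, psiR φ (Y ω) ∂P + ∫ ω, (φ (Z ω)).toReal ∂P := by
  rw [← integral_add (hφ.integrable_psiR_of_isSubgradientAt hZ hYZ hφZ) hφZ]
  exact integral_congr_ae (hZ.mono fun _ hω => hφ.mul_eq_psiR_add_toReal hω)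

lemma le_rhoObj_of_mem_dualSet (hφ : IsDivergenceFunction φ) {v : EReal}
    (hv : v ∈ dualSet φ β P X) (μ : ℝ) (ht : 0 < t) : v ≤ rhoObj φ β P X μ t := by
  obtain ⟨Z, hZ, hZ0, hZ1, hφZ, hφβ, hXZ, rfl⟩ := hv
  unfold rhoObj
  split_ifs with hψ
  · have hyoung := hφ.integral_mul_le_integral_psiR_add hZ0
      (integrable_div_sub_mul hZ hXZ μ t) hψ hφZ
    rw [integral_div_sub_mul hZ hXZ, hZ1, sub_le_iff_le_add, div_le_iff₀' ht] at hyoung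
    refine EReal.coe_le_coe (hyoung.trans (mul_le_mul_of_nonneg_left ?_ ht.le))
    linarith
  · exact le_top

lemma sSup_dualSet_le_rhoDiv (hφ : IsDivergenceFunction φ) :
    sSup (dualSet φ β P X) ≤ rhoDiv φ β P X :=
  sSup_le fun _ hv => le_iInf fun μ => le_iInf₂ fun _ ht => hφ.le_rhoObj_of_mem_dualSet hv μ ht

lemma coe_integral_mul_eq_rhoObj (hφ : IsDivergenceFunction φ) (ht : 0 < t)
    (hsub : ∀ᵐ ω ∂P, IsSubgradientAt (psiR φ) (X ω / t - μ) (Z ω))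
    (hZ : Integrable Z P) (hZ1 : ∫ ω, Z ω ∂P = 1)
    (hφZ : Integrable (fun ω => (φ (Z ω)).toReal) P)
    (hXZ : Integrable (fun ω => X ω * Z ω) P) :
    ((∫ ω, X ω * Z ω ∂P : ℝ) : EReal) = rhoObj φ (∫ ω, (φ (Z ω)).toReal ∂P) P X μ t := by
  have hYZ := integrable_div_sub_mul hZ hXZ μ t
  have hyoung := hφ.integral_mul_eq_integral_psiR_add hsub hYZ hφZ
  rw [integral_div_sub_mul hZ hXZ, hZ1, sub_eq_iff_eq_add, div_eq_iff ht.ne'] at hyoung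
  rw [rhoObj, if_pos (hφ.integrable_psiR_of_isSubgradientAt hsub hYZ hφZ), hyoung]
  congr 1
  ring

end IsDivergenceFunction

end Expectation

lemma rhoDiv_le_rhoObj (φ : ℝ → EReal) (β : ℝ) (P : Measure Ω) (X : Ω → ℝ) (μ : ℝ) {t : ℝ}
    (ht : 0 < t) : rhoDiv φ β P X ≤ rhoObj φ β P X μ t :=
  iInf_le_of_le μ (iInf₂_le t ht)

theorem characterizing_equations_general {P : Measure Ω} {φ : ℝ → EReal}
    (hφ : IsDivergenceFunction φ) {β : ℝ} {X Z : Ω → ℝ} (hX : AEStronglyMeasurable X P)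
    (hXψ : ∃ s : ℝ, 0 < s ∧ Integrable (fun ω => psiR φ (s * |X ω|)) P)
    {μ t : ℝ} (ht : 0 < t) (hsub : ∀ᵐ ω ∂P, IsSubgradientAt (psiR φ) (X ω / t - μ) (Z ω))
    (hZ : Integrable Z P) (hZ1 : ∫ ω, Z ω ∂P = 1)
    (hφZ : Integrable (fun ω => (φ (Z ω)).toReal) P) (hφβ : ∫ ω, (φ (Z ω)).toReal ∂P = β) :
    (∀ᵐ ω ∂P, 0 ≤ Z ω) ∧
    Integrable (fun ω => X ω * Z ω) P ∧
    ((∫ ω, X ω * Z ω ∂P : ℝ) : EReal) = sSup (dualSet φ β P X) ∧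
    ((∫ ω, X ω * Z ω ∂P : ℝ) : EReal) = rhoObj φ β P X μ t ∧
    rhoObj φ β P X μ t = rhoDiv φ β P X := by
  have hZ0 : ∀ᵐ ω ∂P, 0 ≤ Z ω := hsub.mono fun _ => hφ.nonneg_of_isSubgradientAt
  have hXZ := hφ.integrable_mul_of_integrable_psiR hX hXψ hZ.aestronglyMeasurable hZ0 hφZ
  have hobj : ((∫ ω, X ω * Z ω ∂P : ℝ) : EReal) = rhoObj φ β P X μ t :=
    hφβ ▸ hφ.coe_integral_mul_eq_rhoObj ht hsub hZ hZ1 hφZ hXZ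
  have hle_sSup : ((∫ ω, X ω * Z ω ∂P : ℝ) : EReal) ≤ sSup (dualSet φ β P X) :=
    le_sSup ⟨Z, hZ, hZ0, hZ1, hφZ, hφβ.le, hXZ, rfl⟩
  have hsSup_le : sSup (dualSet φ β P X) ≤ rhoDiv φ β P X := hφ.sSup_dualSet_le_rhoDiv
  have hdiv_le : rhoDiv φ β P X ≤ rhoObj φ β P X μ t := rhoDiv_le_rhoObj φ β P X μ ht
  exact ⟨hZ0, hXZ, hle_sSup.antisymm (hobj ▸ hsSup_le.trans hdiv_le), hobj,
    (hobj ▸ hle_sSup.trans hsSup_le).antisymm hdiv_le⟩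

/-- Characterizing equations: if `μ*` and `t* > 0` solve `E[ψ′(X/t* − μ*)] = 1` and
`E[φ(ψ′(X/t* − μ*))] = β`, then `Z* = ψ′(X/t* − μ*)` is feasible and optimal in the dual
representation, `E[X·Z*] = sup dualSet = t*(β + μ* + E ψ(X/t* − μ*)) = ρ_{φ,β}(X)`;
in particular `μ*` and `t*` attain the infimum defining `ρ_{φ,β}(X)`. -/
theorem characterizing_equations (P : Measure Ω) [IsProbabilityMeasure P]
    (φ : ℝ → EReal) (hφ : IsDivergenceFunction φ) (β : ℝ) (hβ : 0 < β)
    (X : Ω → ℝ) (hX : Integrable X P)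
    (hXpsi : ∃ t : ℝ, 0 < t ∧ Integrable (fun ω => psiR φ (t * |X ω|)) P)
    (ψ' : ℝ → ℝ) (hsub : ∀ x z : ℝ, ψ' x * (z - x) ≤ psiR φ z - psiR φ x)
    (μ t : ℝ) (ht : 0 < t)
    (hZint : Integrable (fun ω => ψ' (X ω / t - μ)) P)
    (hZ1 : (∫ ω, ψ' (X ω / t - μ) ∂P) = 1)
    (hfin : ∀ᵐ ω ∂P, φ (ψ' (X ω / t - μ)) ≠ ⊤)
    (hφint : Integrable (fun ω => (φ (ψ' (X ω / t - μ))).toReal) P)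
    (hφβ : (∫ ω, (φ (ψ' (X ω / t - μ))).toReal ∂P) = β) :
    (∀ᵐ ω ∂P, 0 ≤ ψ' (X ω / t - μ)) ∧
    Integrable (fun ω => X ω * ψ' (X ω / t - μ)) P ∧
    ((∫ ω, X ω * ψ' (X ω / t - μ) ∂P : ℝ) : EReal) = sSup (dualSet φ β P X) ∧
    ((∫ ω, X ω * ψ' (X ω / t - μ) ∂P : ℝ) : EReal) = rhoObj φ β P X μ t ∧
    rhoObj φ β P X μ t = rhoDiv φ β P X := by
  exact characterizing_equations_general hφ hX.aestronglyMeasurable hXpsi ht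
    (.of_forall fun _ => hsub _) hZint hZ1 hφint hφβ
end
end
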